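/- Let Ω ⊆ ℝ^N be an open set and suppose there exists k ∈ ℕ\{0} such that λ_{k,2}^{LS}(Ω) < E(Ω), where E(Ω) := sup_{R>0} λ_1(Ω \ closure(B_R)). Then for every ℓ ∈ {1,…,k} one has λ_{ℓ,2}^{LS}(Ω) = λ_ℓ(Ω), where λ_ℓ(Ω) is the ℓ-th Courant–Fischer minmax value λ_ℓ(Ω) := inf{ max_{u ∈ K ∩ S_2(Ω)} ∫_Ω |∇u|^2 dx : K ⊆ W^{1,2}_0(Ω) a linear subspace with dim K = ℓ }. -/

import Mathlib

open MeasureTheory Filter Topology Metric Set ENNReal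
open scoped RealInnerProductSpace

noncomputable section

/-- Euclidean space `ℝ^N`. -/
abbrev EucN (N : ℕ) := EuclideanSpace ℝ (Fin N)

/-- A test function on an open set `Ω ⊆ ℝ^N`: smooth, with compact support contained in `Ω`. -/
def IsTestFun {N : ℕ} (Ω : Set (EucN N)) (φ : EucN N → ℝ) : Prop :=
  ContDiff ℝ (⊤ : ℕ∞) φ ∧ HasCompactSupport φ ∧ tsupport φ ⊆ Ω

/-- Pairs `(u, g)` in `L^q × L^q`, thought of as a function together with its (weak) gradient. -/
abbrev SobPair (N : ℕ) (q : ℝ≥0∞) :=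
  Lp ℝ q (volume : Measure (EucN N)) × Lp (EucN N) q (volume : Measure (EucN N))

/-- A pair given (a.e.) by a test function and its gradient. -/
def IsTestPair {N : ℕ} (q : ℝ≥0∞) (Ω : Set (EucN N)) (w : SobPair N q) : Prop :=
  ∃ ψ : EucN N → ℝ, IsTestFun Ω ψ ∧ (⇑w.1 =ᵐ[volume] ψ) ∧
    (⇑w.2 =ᵐ[volume] fun x => gradient ψ x)

theorem fact_one_le_ofReal {p : ℝ} (hp : 1 ≤ p) : Fact (1 ≤ ENNReal.ofReal p) :=
  ⟨ENNReal.one_le_ofReal.mpr hp⟩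

/-- The Sobolev space `W^{1,p}_0(Ω)`, realized as the closure in `L^p × L^p` of the set of
pairs (test function, its gradient). -/
def W10 (N : ℕ) (p : ℝ) (hp : 1 ≤ p) (Ω : Set (EucN N)) :
    Set (SobPair N (ENNReal.ofReal p)) :=
  letI := fact_one_le_ofReal hp
  closure {w | IsTestPair (ENNReal.ofReal p) Ω w}

/-- The first eigenvalue `λ_{1,p}(Ω)` (as an extended real, `∞` if there are no admissible
functions). -/
def lambda1p (N : ℕ) (p : ℝ) (hp : 1 ≤ p) (Ω : Set (EucN N)) : ℝ≥0∞ :=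
  sInf {t | ∃ w ∈ W10 N p hp Ω, (∫ x, |w.1 x| ^ p) = 1 ∧
    t = ENNReal.ofReal (∫ x, ‖w.2 x‖ ^ p)}

/-- The `L^p` Poincaré constant "at infinity" `E_p(Ω)`. -/
def Einfty (N : ℕ) (p : ℝ) (hp : 1 ≤ p) (Ω : Set (EucN N)) : ℝ≥0∞ :=
  ⨆ R ∈ Set.Ioi (0 : ℝ), lambda1p N p hp (Ω \ closure (ball (0 : EucN N) R))

/-- There is a continuous odd map from `A` to the unit sphere `S^{j-1} ⊆ ℝ^j`. -/
def HasOddMapToSphere {Z : Type*} [NormedAddCommGroup Z] (A : Set Z) (j : ℕ) : Prop :=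
  ∃ f : Z → EuclideanSpace ℝ (Fin j),
    ContinuousOn f A ∧ (∀ x ∈ A, ‖f x‖ = 1) ∧ ∀ x ∈ A, f (-x) = -f x

/-- The Krasnosel'skii genus of `A` is at least `k`. -/
def genusGE {Z : Type*} [NormedAddCommGroup Z] (A : Set Z) (k : ℕ) : Prop :=
  ∀ j : ℕ, HasOddMapToSphere A j → k ≤ j

/-- The Krasnosel'skii genus of `A`, valued in `ℕ∞`. -/
def genus {Z : Type*} [NormedAddCommGroup Z] (A : Set Z) : ℕ∞ :=
  sInf {k : ℕ∞ | ∃ j : ℕ, (j : ℕ∞) = k ∧ HasOddMapToSphere A j}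

/-- The class `𝒲_{k,p}(Ω)` of compact symmetric subsets of `S_p(Ω) ∩ W^{1,p}_0(Ω)` with
genus at least `k`. -/
def SobClass (N : ℕ) (p : ℝ) (hp : 1 ≤ p) (Ω : Set (EucN N)) (k : ℕ) :
    Set (Set (SobPair N (ENNReal.ofReal p))) :=
  letI := fact_one_le_ofReal hp
  {K | K ⊆ W10 N p hp Ω ∧ (∀ w ∈ K, (∫ x, |w.1 x| ^ p) = 1) ∧
       (∀ w ∈ K, -w ∈ K) ∧ IsCompact K ∧ genusGE K k}

/-- The `k`-th minmax Ljusternik–Schnirelmann value `λ_{k,p}^{LS}(Ω)`. -/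
def lambdaLS (N : ℕ) (p : ℝ) (hp : 1 ≤ p) (Ω : Set (EucN N)) (k : ℕ) : ℝ≥0∞ :=
  ⨅ K ∈ SobClass N p hp Ω k, ⨆ w ∈ K, ENNReal.ofReal (∫ x, ‖w.2 x‖ ^ p)

/-- `w = (u, ∇u)` is an eigenfunction of the Dirichlet `p`-Laplacian on `Ω` associated to the
eigenvalue `lam`. -/
def IsEigenfunction (N : ℕ) (p : ℝ) (hp : 1 ≤ p) (Ω : Set (EucN N)) (lam : ℝ)
    (w : SobPair N (ENNReal.ofReal p)) : Prop :=
  w ∈ W10 N p hp Ω ∧ w ≠ 0 ∧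
  ∀ φ : EucN N → ℝ, IsTestFun Ω φ →
    (∫ x, ‖w.2 x‖ ^ (p - 2) * ⟪w.2 x, gradient φ x⟫) =
      lam * ∫ x, |w.1 x| ^ (p - 2) * (w.1 x) * φ x

/-- `lam` is an eigenvalue of the Dirichlet `p`-Laplacian on `Ω`. -/
def IsEigenvalue (N : ℕ) (p : ℝ) (hp : 1 ≤ p) (Ω : Set (EucN N)) (lam : ℝ) : Prop :=
  ∃ w, IsEigenfunction N p hp Ω lam w

/-- `v = (v, ∇v)` is a non-negative weak subsolution of `-Δ_p u = lam · u^{p-1}` in `Ω`. -/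
def IsSubsolution (N : ℕ) (p : ℝ) (hp : 1 ≤ p) (Ω : Set (EucN N)) (lam : ℝ)
    (v : SobPair N (ENNReal.ofReal p)) : Prop :=
  v ∈ W10 N p hp Ω ∧ (∀ᵐ x, 0 ≤ v.1 x) ∧
  ∀ φ ∈ W10 N p hp Ω, (∀ᵐ x, 0 ≤ φ.1 x) →
    (∫ x, ‖v.2 x‖ ^ (p - 2) * ⟪v.2 x, φ.2 x⟫) ≤ lam * ∫ x, (v.1 x) ^ (p - 1) * φ.1 x

/-- A strongly confining potential. -/
def StronglyConfining (N : ℕ) (V : EucN N → ℝ) : Prop :=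
  LocallyIntegrable V volume ∧ (∀ᵐ x, 0 ≤ V x) ∧
  ∃ α : ℝ → ℝ, (∀ R > (0 : ℝ), 0 < α R) ∧ MonotoneOn α (Set.Ioi 0) ∧
    Tendsto α atTop atTop ∧
    ∀ R > (0 : ℝ), ∀ᵐ x, x ∉ ball (0 : EucN N) R → α R ≤ V x

/-- Triples `(u, g, h)` in `L^q × L^q × L^q`; `h` plays the role of `V^{1/p} u` in the weighted
Sobolev space. -/
abbrev SobTriple (N : ℕ) (q : ℝ≥0∞) :=
  Lp ℝ q (volume : Measure (EucN N)) × Lp (EucN N) q (volume : Measure (EucN N)) ×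
    Lp ℝ q (volume : Measure (EucN N))

/-- A triple given (a.e.) by a test function, its gradient, and `V^{1/p}` times it. -/
def IsTestTriple {N : ℕ} (q : ℝ≥0∞) (p : ℝ) (Ω : Set (EucN N)) (V : EucN N → ℝ)
    (w : SobTriple N q) : Prop :=
  ∃ ψ : EucN N → ℝ, IsTestFun Ω ψ ∧ (⇑w.1 =ᵐ[volume] ψ) ∧
    (⇑w.2.1 =ᵐ[volume] fun x => gradient ψ x) ∧
    (⇑w.2.2 =ᵐ[volume] fun x => (V x) ^ (1/p) * ψ x)

/-- The weighted Sobolev space `W^{1,p}_0(Ω; V)`, realized as a closure of triples coming from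
test functions; the norm topology of `L^p × L^p × L^p` on such triples corresponds exactly to
the weighted Sobolev norm `(∫|∇u|^p + ∫(1+V)|u|^p)^{1/p}`. -/
def W10V (N : ℕ) (p : ℝ) (hp : 1 ≤ p) (Ω : Set (EucN N)) (V : EucN N → ℝ) :
    Set (SobTriple N (ENNReal.ofReal p)) :=
  letI := fact_one_le_ofReal hp
  closure {w | IsTestTriple (ENNReal.ofReal p) p Ω V w}

/-- The class `𝒲_{k,p}(Ω; V)` for the weighted space. -/
def SobClassV (N : ℕ) (p : ℝ) (hp : 1 ≤ p) (Ω : Set (EucN N)) (V : EucN N → ℝ) (k : ℕ) :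
    Set (Set (SobTriple N (ENNReal.ofReal p))) :=
  letI := fact_one_le_ofReal hp
  {K | K ⊆ W10V N p hp Ω V ∧ (∀ w ∈ K, (∫ x, |w.1 x| ^ p) = 1) ∧
       (∀ w ∈ K, -w ∈ K) ∧ IsCompact K ∧ genusGE K k}

/-- The perturbed minmax value `λ_{k,p}^{LS}(Ω; ε V)`, for the functional
`G(φ) = ∫|∇φ|^p + ε ∫ V |φ|^p`. -/
def lambdaLSV (N : ℕ) (p : ℝ) (hp : 1 ≤ p) (Ω : Set (EucN N)) (V : EucN N → ℝ)
    (ε : ℝ) (k : ℕ) : ℝ≥0∞ :=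
  ⨅ K ∈ SobClassV N p hp Ω V k, ⨆ w ∈ K,
    ENNReal.ofReal ((∫ x, ‖w.2.1 x‖ ^ p) + ε * ∫ x, |w.2.2 x| ^ p)

/-- `w` is a constrained critical point, at level `lam`, of the perturbed functional
`G(φ) = ∫|∇φ|^p + ε ∫ V |φ|^p` on the unit sphere of `L^p`. -/
def IsCriticalV (N : ℕ) (p : ℝ) (hp : 1 ≤ p) (Ω : Set (EucN N)) (V : EucN N → ℝ)
    (ε : ℝ) (lam : ℝ) (w : SobTriple N (ENNReal.ofReal p)) : Prop :=
  w ∈ W10V N p hp Ω V ∧ (∫ x, |w.1 x| ^ p) = 1 ∧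
  ∀ φ : EucN N → ℝ, IsTestFun Ω φ →
    (∫ x, ‖w.2.1 x‖ ^ (p - 2) * ⟪w.2.1 x, gradient φ x⟫)
      + ε * ∫ x, V x * |w.1 x| ^ (p - 2) * (w.1 x) * φ x
    = lam * ∫ x, |w.1 x| ^ (p - 2) * (w.1 x) * φ x

/-- The embedding `W^{1,p}_0(Ω) ↪ L^p(Ω)` is compact: every bounded sequence in `W^{1,p}_0(Ω)`
has a subsequence converging strongly in `L^p`. -/
def CompactSobolevEmbedding (N : ℕ) (p : ℝ) (hp : 1 ≤ p) (Ω : Set (EucN N)) : Prop :=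
  ∀ w : ℕ → SobPair N (ENNReal.ofReal p), (∀ n, w n ∈ W10 N p hp Ω) →
    (∃ M : ℝ≥0∞, M ≠ ⊤ ∧ ∀ n, eLpNorm (⇑(w n).1) (ENNReal.ofReal p) volume ≤ M ∧
        eLpNorm (⇑(w n).2) (ENNReal.ofReal p) volume ≤ M) →
    ∃ σ : ℕ → ℕ, StrictMono σ ∧ ∃ u : EucN N → ℝ, MemLp u (ENNReal.ofReal p) volume ∧
      Tendsto (fun n => eLpNorm (⇑(w (σ n)).1 - u) (ENNReal.ofReal p) volume) atTop (𝓝 0)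


/-- The `ℓ`-th Courant–Fischer minmax value for the Dirichlet Laplacian (`p = 2`). -/
noncomputable def courantFischer (N : ℕ) (Ω : Set (EucN N)) (ℓ : ℕ) : ℝ≥0∞ :=
  letI := fact_one_le_ofReal (by norm_num : (1 : ℝ) ≤ 2)
  ⨅ K ∈ {K : Submodule ℝ (SobPair N (ENNReal.ofReal 2)) |
      (K : Set (SobPair N (ENNReal.ofReal 2))) ⊆ W10 N 2 (by norm_num) Ω ∧
        Module.finrank ℝ K = ℓ},
    ⨆ w ∈ {w | w ∈ (K : Set (SobPair N (ENNReal.ofReal 2))) ∧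
      (∫ x, |w.1 x| ^ (2 : ℝ)) = 1},
      ENNReal.ofReal (∫ x, ‖w.2 x‖ ^ (2 : ℝ))


/-!
`λ_ℓ ≤ λ_ℓ^{LS}`: if `A` is compact of genus at least `ℓ` and `∫ |∇u|² < c` on `A`, then the form
`∫ ⟪∇u, ∇v⟫ - c ∫ u v` is negative on `A`. Given a subspace `V` of dimension `d < ℓ`, the odd map
`A → V*` induced by the form has a zero, so `A` contains a vector orthogonal to `V` for the form.
Iterating produces an `ℓ`-dimensional subspace of the span of `A` on which the form is nonpositive.

`λ_ℓ^{LS} ≤ λ_ℓ`: the `L²` unit sphere of an `ℓ`-dimensional subspace is compact and symmetric (an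
element of `W_0^{1,2}` with vanishing function has vanishing gradient), and it has genus `ℓ`. The
Borsuk–Ulam theorem is avoided in this last point: since `λ_k^{LS}` is finite, there is a compact
symmetric set `A` of genus at least `k ≥ ℓ`. Suspending and iterating an odd map
`S^{ℓ-1} → S^{j-1}` with `j < ℓ` would send every sphere, hence also `A`, oddly to `S^{j-1}`.
-/

/-! ### Odd maps and the genus -/

/-- There is a continuous odd map `E → F` that vanishes at most at the origin. Such maps play the
role of the odd maps between unit spheres in the Borsuk–Ulam theorem, with the advantage that they
compose with linear maps without renormalization. -/
def HasOddNonvanishingMap (E F : Type*) [TopologicalSpace E] [AddGroup E] [TopologicalSpace F]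
    [AddGroup F] : Prop :=
  ∃ f : E → F, Continuous f ∧ (∀ x, f (-x) = -f x) ∧ ∀ x, x ≠ 0 → f x ≠ 0

namespace HasOddNonvanishingMap

section Topological

variable {E F G : Type*} [TopologicalSpace E] [AddGroup E] [TopologicalSpace F] [AddGroup F]
  [TopologicalSpace G] [AddGroup G]

theorem trans (hEF : HasOddNonvanishingMap E F) (hFG : HasOddNonvanishingMap F G) :
    HasOddNonvanishingMap E G := by
  obtain ⟨f, f_cont, f_odd, f_ne⟩ := hEF
  obtain ⟨g, g_cont, g_odd, g_ne⟩ := hFG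
  exact ⟨g ∘ f, g_cont.comp f_cont, fun x ↦ by simp only [Function.comp_apply, f_odd, g_odd],
    fun x hx ↦ g_ne _ (f_ne x hx)⟩

theorem prodMap_id (h : HasOddNonvanishingMap E F) : HasOddNonvanishingMap (E × G) (F × G) := by
  obtain ⟨f, f_cont, f_odd, f_ne⟩ := h
  refine ⟨Prod.map f id, f_cont.prodMap continuous_id,
    fun x ↦ Prod.ext (f_odd x.1) rfl, fun x hx hfx ↦ ?_⟩
  rw [Prod.map_apply', Prod.mk_eq_zero] at hfx
  exact f_ne x.1 (fun h1 ↦ hx (Prod.ext h1 hfx.2)) hfx.1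

end Topological

variable {E F : Type*} [NormedAddCommGroup E] [NormedSpace ℝ E] [NormedAddCommGroup F]
  [NormedSpace ℝ F]

theorem of_finrank_le [FiniteDimensional ℝ E] [FiniteDimensional ℝ F]
    (h : Module.finrank ℝ E ≤ Module.finrank ℝ F) : HasOddNonvanishingMap E F := by
  obtain ⟨L, hL⟩ := finrank_le_iff_exists_linearMap.1 h
  exact ⟨L, L.continuous_of_finiteDimensional, map_neg L,
    fun x hx ↦ (map_ne_zero_iff L hL).2 hx⟩

-- Suspending a map that lowers the dimension and composing with it again, `ℝ^(n+1)` is sent to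
-- `F × ℝ`, whose dimension is still at most that of `E`.
theorem of_finrank_lt [FiniteDimensional ℝ E] [FiniteDimensional ℝ F]
    (hEF : HasOddNonvanishingMap E F) (hlt : Module.finrank ℝ F < Module.finrank ℝ E) (n : ℕ) :
    HasOddNonvanishingMap (Fin n → ℝ) F := by
  induction n with
  | zero => exact of_finrank_le (by simp)
  | succ n ih =>
    have split : HasOddNonvanishingMap (Fin (n + 1) → ℝ) ((Fin n → ℝ) × ℝ) :=
      of_finrank_le (by simp)
    have embed : HasOddNonvanishingMap (F × ℝ) E := of_finrank_le (by simpa using hlt)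
    exact split.trans (ih.prodMap_id.trans (embed.trans hEF))

theorem of_hasOddMapToSphere_sphere {j : ℕ} (h : HasOddMapToSphere (sphere (0 : E) 1) j) :
    HasOddNonvanishingMap E (EuclideanSpace ℝ (Fin j)) := by
  obtain ⟨f, f_cont, f_norm, f_odd⟩ := h
  have normalize_mem (x : E) (hx : x ≠ 0) : ‖x‖⁻¹ • x ∈ sphere (0 : E) 1 := by
    simp [norm_smul, hx]
  have norm_extension (x : E) : ‖‖x‖ • f (‖x‖⁻¹ • x)‖ = ‖x‖ := by
    rcases eq_or_ne x 0 with rfl | hx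
    · simp
    · rw [norm_smul, norm_norm, f_norm _ (normalize_mem x hx), mul_one]
  refine ⟨fun x ↦ ‖x‖ • f (‖x‖⁻¹ • x), continuous_iff_continuousAt.2 fun x ↦ ?_, fun x ↦ ?_,
    fun x hx ↦ ?_⟩
  · rcases eq_or_ne x 0 with rfl | hx
    · rw [ContinuousAt, norm_zero, zero_smul, tendsto_zero_iff_norm_tendsto_zero]
      simpa only [norm_extension] using tendsto_norm_zero
    · have normalize_cont : ContinuousOn (fun y : E ↦ ‖y‖⁻¹ • y) {0}ᶜ :=
        (continuousOn_id.norm.inv₀ fun y hy ↦ norm_ne_zero_iff.2 hy).smul continuousOn_id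
      exact continuous_norm.continuousAt.smul <|
        (f_cont.comp normalize_cont normalize_mem).continuousAt (isOpen_compl_singleton.mem_nhds hx)
  · rcases eq_or_ne x 0 with rfl | hx
    · simp
    · beta_reduce
      rw [norm_neg, smul_neg, f_odd _ (normalize_mem x hx), smul_neg]
  · rw [← norm_ne_zero_iff, norm_extension]
    exact norm_ne_zero_iff.2 hx

end HasOddNonvanishingMap

section Genus

variable {E F : Type*} [NormedAddCommGroup E] [NormedSpace ℝ E] [NormedAddCommGroup F]
  [NormedSpace ℝ F]

theorem genusGE.exists_map_eq_zero {Z : Type*} [NormedAddCommGroup Z] [FiniteDimensional ℝ F]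
    {A : Set Z} {k : ℕ} (hA : genusGE A k) (hF : Module.finrank ℝ F < k) {f : Z → F}
    (hf : ContinuousOn f A) (f_odd : ∀ x ∈ A, f (-x) = -f x) : ∃ x ∈ A, f x = 0 := by
  by_contra! f_ne
  let g (x : Z) := toEuclidean (f x)
  have g_cont : ContinuousOn g A := toEuclidean.continuous.comp_continuousOn hf
  have g_ne (x : Z) (hx : x ∈ A) : ‖g x‖ ≠ 0 := by simpa [g] using f_ne x hx
  have sphere_map : HasOddMapToSphere A (Module.finrank ℝ F) :=
    ⟨fun x ↦ ‖g x‖⁻¹ • g x, (g_cont.norm.inv₀ g_ne).smul g_cont,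
      fun x hx ↦ by rw [norm_smul, norm_inv, norm_norm, inv_mul_cancel₀ (g_ne x hx)],
      fun x hx ↦ by simp [g, f_odd x hx]⟩
  exact hF.not_ge (hA _ sphere_map)

theorem genusGE.of_mapsTo {Y Z : Type*} [NormedAddCommGroup Y] [NormedAddCommGroup Z]
    {A : Set Y} {B : Set Z} {k : ℕ} (hA : genusGE A k) {g : Y → Z} (hg : ContinuousOn g A)
    (hAB : MapsTo g A B) (g_odd : ∀ x ∈ A, g (-x) = -g x) : genusGE B k := by
  rintro j ⟨f, f_cont, f_norm, f_odd⟩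
  exact hA j ⟨f ∘ g, f_cont.comp hg hAB, fun x hx ↦ f_norm _ (hAB hx),
    fun x hx ↦ by simp only [Function.comp_apply, g_odd x hx, f_odd _ (hAB hx)]⟩

theorem exists_continuousLinearMap_pi_ne_zero {A : Set E} (hA : IsCompact A) (h0 : 0 ∉ A) :
    ∃ (m : ℕ) (L : E →L[ℝ] Fin m → ℝ), ∀ x ∈ A, L x ≠ 0 := by
  obtain ⟨t, ht⟩ := hA.elim_finite_subcover (fun g : E →L[ℝ] ℝ ↦ {x | g x ≠ 0})
    (fun g ↦ isOpen_ne_fun g.continuous continuous_const) fun x hx ↦ by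
      have hx0 : x ≠ 0 := ne_of_mem_of_not_mem hx h0
      exact mem_iUnion.2 (SeparatingDual.exists_ne_zero (R := ℝ) hx0)
  refine ⟨t.card, ContinuousLinearMap.pi fun i ↦ (t.equivFin.symm i : E →L[ℝ] ℝ), fun x hx hLx ↦ ?_⟩
  obtain ⟨g, hgt, hgx⟩ := mem_iUnion₂.1 (ht hx)
  exact hgx (by simpa using congrFun hLx (t.equivFin ⟨g, hgt⟩))

-- A substitute for the Borsuk–Ulam theorem: an odd map lowering the dimension of a sphere would
-- produce, through `HasOddNonvanishingMap.of_finrank_lt`, an odd map from `A` to the same sphere.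
theorem genusGE.sphere_finrank {A : Set F} {k : ℕ} (hA : genusGE A k) (A_compact : IsCompact A)
    (h0 : 0 ∉ A) [FiniteDimensional ℝ E] (hE : Module.finrank ℝ E ≤ k) :
    genusGE (sphere (0 : E) 1) (Module.finrank ℝ E) := by
  intro j hj
  by_contra! hlt
  obtain ⟨m, L, L_ne⟩ := exists_continuousLinearMap_pi_ne_zero A_compact h0
  obtain ⟨f, f_cont, f_odd, f_ne⟩ :=
    (HasOddNonvanishingMap.of_hasOddMapToSphere_sphere hj).of_finrank_lt (by simpa using hlt) m
  obtain ⟨x, hxA, hx⟩ := hA.exists_map_eq_zero (f := f ∘ L) (by simpa using hlt.trans_le hE)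
    (f_cont.comp L.continuous).continuousOn fun x _ ↦ by
      simp only [Function.comp_apply, map_neg, f_odd]
  exact f_ne _ (L_ne x hxA) hx

end Genus

/-! ### Spheres of finite-dimensional subspaces -/

section SubspaceSphere

variable {Z F : Type*} [NormedAddCommGroup Z] [NormedSpace ℝ Z] [NormedAddCommGroup F]
  [NormedSpace ℝ F] {V : Submodule ℝ Z} {P : Z →L[ℝ] F}

theorem isCompact_setOf_mem_and_norm_eq_one [FiniteDimensional ℝ V]
    (hP : ∀ w ∈ V, P w = 0 → w = 0) :
    IsCompact {w | w ∈ V ∧ ‖P w‖ = 1} := by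
  let PV : V →L[ℝ] F := P.comp V.subtypeL
  have PV_injective : Function.Injective PV :=
    (injective_iff_map_eq_zero PV).2 fun w hw ↦ Subtype.ext (hP w w.2 hw)
  obtain ⟨_, -, PV_antilipschitz⟩ :=
    (PV : V →ₗ[ℝ] F).injective_iff_antilipschitz.1 PV_injective
  have preimage_compact : IsCompact (PV ⁻¹' sphere 0 1) :=
    isCompact_of_isClosed_isBounded (isClosed_sphere.preimage PV.continuous)
      (PV_antilipschitz.isBounded_preimage isBounded_sphere)
  convert preimage_compact.image continuous_subtype_val using 1
  ext w
  simp [PV, and_comm]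

theorem genusGE.setOf_mem_and_norm_eq_one {k : ℕ} (hV : genusGE (sphere (0 : V) 1) k)
    (hP : ∀ w ∈ V, P w = 0 → w = 0) : genusGE {w | w ∈ V ∧ ‖P w‖ = 1} k := by
  have P_ne (x : V) (hx : x ∈ sphere (0 : V) 1) : ‖P x‖ ≠ 0 := fun h ↦
    ne_zero_of_mem_unit_sphere (⟨x, hx⟩ : sphere (0 : V) 1)
      (Subtype.ext (hP x x.2 (norm_eq_zero.1 h)))
  refine hV.of_mapsTo (g := fun x ↦ ‖P x‖⁻¹ • (x : Z)) ?_ (fun x hx ↦ ⟨?_, ?_⟩) fun x _ ↦ ?_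
  · exact (Continuous.continuousOn (by fun_prop)).inv₀ P_ne |>.smul
      continuous_subtype_val.continuousOn
  · exact V.smul_mem _ x.2
  · rw [map_smul, norm_smul, norm_inv, norm_norm, inv_mul_cancel₀ (P_ne x hx)]
  · simp

end SubspaceSphere

/-! ### Symmetric forms that are negative on a set of large genus -/

section SymmetricForm

variable {Z : Type*} [NormedAddCommGroup Z] [NormedSpace ℝ Z] {Q : Z →L[ℝ] Z →L[ℝ] ℝ}

theorem apply_self_nonpos_of_mem_sup_span_singleton (hQ : ∀ x y, Q x y = Q y x)
    {V : Submodule ℝ Z} (hV : ∀ v ∈ V, Q v v ≤ 0) {y : Z} (hy : Q y y ≤ 0)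
    (y_orth : ∀ v ∈ V, Q y v = 0) {x : Z} (hx : x ∈ V ⊔ Submodule.span ℝ {y}) : Q x x ≤ 0 := by
  obtain ⟨v, hv, _, hty, rfl⟩ := Submodule.mem_sup.1 hx
  obtain ⟨t, rfl⟩ := Submodule.mem_span_singleton.1 hty
  have expand : Q (v + t • y) (v + t • y) = Q v v + t ^ 2 * Q y y := by
    simp only [map_add, map_smul, add_apply, smul_apply, smul_eq_mul,
      hQ v y, y_orth v hv]
    ring
  rw [expand]
  exact add_nonpos (hV v hv) (mul_nonpos_of_nonneg_of_nonpos (sq_nonneg t) hy)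

theorem finrank_sup_span_singleton_of_notMem {K M : Type*} [DivisionRing K] [AddCommGroup M]
    [Module K M] {V : Submodule K M} [FiniteDimensional K V] {y : M} (hy : y ∉ V) :
    Module.finrank K ↥(V ⊔ Submodule.span K {y}) = Module.finrank K V + 1 := by
  have inf_eq_bot := (Submodule.disjoint_span_singleton_of_notMem hy).eq_bot
  have hy0 : y ≠ 0 := fun h ↦ hy (h ▸ V.zero_mem)
  have dimension_formula := Submodule.finrank_sup_add_finrank_inf_eq V (Submodule.span K {y})
  rwa [inf_eq_bot, finrank_bot, add_zero, finrank_span_singleton hy0] at dimension_formula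

theorem genusGE.exists_mem_forall_apply_eq_zero {A : Set Z} {k : ℕ} (hA : genusGE A k)
    (Q : Z →L[ℝ] Z →L[ℝ] ℝ) {V : Submodule ℝ Z} [FiniteDimensional ℝ V]
    (hV : Module.finrank ℝ V < k) : ∃ y ∈ A, ∀ v ∈ V, Q y v = 0 := by
  have finrank_dual : Module.finrank ℝ (V →L[ℝ] ℝ) = Module.finrank ℝ V :=
    LinearMap.toContinuousLinearMap.finrank_eq.symm.trans Subspace.dual_finrank_eq
  have : FiniteDimensional ℝ (V →L[ℝ] ℝ) := LinearMap.toContinuousLinearMap.finiteDimensional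
  obtain ⟨y, hyA, hy⟩ := hA.exists_map_eq_zero (finrank_dual.trans_lt hV)
    (f := fun y ↦ (Q y).comp V.subtypeL) (Continuous.continuousOn (by fun_prop))
    fun y _ ↦ by ext; simp
  exact ⟨y, hyA, fun v hv ↦ DFunLike.congr_fun hy ⟨v, hv⟩⟩

theorem genusGE.exists_submodule_forall_apply_self_nonpos (hQ : ∀ x y, Q x y = Q y x) {A : Set Z}
    (hneg : ∀ x ∈ A, Q x x < 0) {k : ℕ} (hA : genusGE A k) :
    ∃ V ≤ Submodule.span ℝ A, FiniteDimensional ℝ V ∧ Module.finrank ℝ V = k ∧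
      ∀ x ∈ V, Q x x ≤ 0 := by
  induction k with
  | zero => exact ⟨⊥, bot_le, inferInstance, finrank_bot ℝ Z, by simp⟩
  | succ k ih =>
    obtain ⟨V, hVA, _, V_finrank, hV⟩ := ih fun j hj ↦ (Nat.le_succ k).trans (hA j hj)
    obtain ⟨y, hyA, y_orth⟩ := hA.exists_mem_forall_apply_eq_zero Q
      (V_finrank.trans_lt k.lt_succ_self)
    have hyV : y ∉ V := fun h ↦ (hneg y hyA).ne (y_orth y h)
    exact ⟨V ⊔ Submodule.span ℝ {y},
      sup_le hVA ((Submodule.span_singleton_le_iff_mem _ _).2 (Submodule.subset_span hyA)),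
      inferInstance, by rw [finrank_sup_span_singleton_of_notMem hyV, V_finrank],
      fun x ↦ apply_self_nonpos_of_mem_sup_span_singleton hQ hV (hneg y hyA).le y_orth⟩

end SymmetricForm

/-! ### Integrals over `L^p` classes -/

section LpIntegrals

variable {X : Type*} [MeasurableSpace X] {μ : Measure X} {E F : Type*} [NormedAddCommGroup E]
  [NormedAddCommGroup F]

theorem continuous_integral_bilin_coeFn_left [NormedSpace ℝ E] [NormedSpace ℝ F]
    (B : E →L[ℝ] F →L[ℝ] ℝ) {q q' : ℝ≥0∞} [Fact (1 ≤ q)] [q.HolderConjugate q'] {φ : X → F}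
    (hφ : MemLp φ q' μ) : Continuous fun f : Lp E q μ ↦ ∫ x, B (f x) (φ x) ∂μ := by
  have : Fact (1 ≤ q') := ⟨ENNReal.HolderConjugate.one_le q' q⟩
  have pairing_eq (f : Lp E q μ) :
      B.lpPairing μ q q' f (hφ.toLp φ) = ∫ x, B (f x) (φ x) ∂μ := by
    rw [ContinuousLinearMap.lpPairing_eq_integral]
    refine integral_congr_ae ?_
    filter_upwards [hφ.coeFn_toLp] with x hx
    rw [hx]
  simp only [← pairing_eq]
  fun_prop

theorem norm_rpow_eq_integral_norm_rpow {p : ℝ} (hp : 0 < p) (f : Lp E (ENNReal.ofReal p) μ) :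
    ‖f‖ ^ p = ∫ x, ‖f x‖ ^ p ∂μ := by
  have energy_nonneg : 0 ≤ ∫ x, ‖f x‖ ^ p ∂μ := integral_nonneg fun x ↦ by positivity
  rw [Lp.norm_def, (Lp.memLp f).eLpNorm_eq_integral_rpow_norm (by simpa using hp)
    ENNReal.ofReal_ne_top, ENNReal.toReal_ofReal hp.le, ENNReal.toReal_ofReal (by positivity),
    Real.rpow_inv_rpow energy_nonneg hp.ne']

theorem integral_norm_rpow_eq_one_iff {p : ℝ} (hp : 0 < p) (f : Lp E (ENNReal.ofReal p) μ) :
    ∫ x, ‖f x‖ ^ p ∂μ = 1 ↔ ‖f‖ = 1 := by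
  have norm_f_nonneg : 0 ≤ ‖f‖ := ENNReal.toReal_nonneg
  simpa only [norm_rpow_eq_integral_norm_rpow hp, Real.one_rpow] using
    Real.rpow_left_inj norm_f_nonneg zero_le_one hp.ne'

end LpIntegrals

/-! ### Weak gradients -/

section WeakGradient

variable {N : ℕ}

/-- `g` is the distributional gradient of `u` on the whole of `ℝ^N`: the direction `e` of
differentiation is a parameter, so that only scalar test functions are needed. -/
def HasWeakGradient (u : EucN N → ℝ) (g : EucN N → EucN N) : Prop :=
  ∀ φ : EucN N → ℝ, IsTestFun univ φ → ∀ e : EucN N,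
    ∫ x, u x * fderiv ℝ φ x e = -∫ x, ⟪g x, e⟫ * φ x

theorem hasWeakGradient_gradient {ψ : EucN N → ℝ} (hψ : ContDiff ℝ 1 ψ) :
    HasWeakGradient ψ (gradient ψ) := by
  intro φ ⟨φ_smooth, φ_supp, _⟩ e
  have dψ_cont : Continuous fun x ↦ fderiv ℝ ψ x e :=
    (hψ.continuous_fderiv one_ne_zero).clm_apply continuous_const
  have dφ_cont : Continuous fun x ↦ fderiv ℝ φ x e :=
    (φ_smooth.continuous_fderiv (by simp)).clm_apply continuous_const
  simp only [inner_gradient_left]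
  exact integral_mul_fderiv_eq_neg_fderiv_mul_of_integrable
    ((dψ_cont.mul φ_smooth.continuous).integrable_of_hasCompactSupport φ_supp.mul_left)
    ((hψ.continuous.mul dφ_cont).integrable_of_hasCompactSupport
      (φ_supp.fderiv_apply ℝ e).mul_left)
    ((hψ.continuous.mul φ_smooth.continuous).integrable_of_hasCompactSupport φ_supp.mul_left)
    (fun x _ ↦ hψ.differentiable one_ne_zero x)
    fun x _ ↦ φ_smooth.differentiable (by simp) x

theorem HasWeakGradient.congr_ae {u v : EucN N → ℝ} {g h : EucN N → EucN N}
    (hug : HasWeakGradient u g) (huv : v =ᵐ[volume] u) (hgh : h =ᵐ[volume] g) :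
    HasWeakGradient v h := by
  intro φ hφ e
  have function_side : ∫ x, v x * fderiv ℝ φ x e = ∫ x, u x * fderiv ℝ φ x e :=
    integral_congr_ae (huv.mono fun x hx ↦ by simp only [hx])
  have gradient_side : ∫ x, ⟪h x, e⟫ * φ x = ∫ x, ⟪g x, e⟫ * φ x :=
    integral_congr_ae (hgh.mono fun x hx ↦ by simp only [hx])
  rw [function_side, gradient_side]
  exact hug φ hφ e

theorem HasWeakGradient.ae_eq_zero {u : EucN N → ℝ} {g : EucN N → EucN N}
    (hug : HasWeakGradient u g) (hg : LocallyIntegrable g) (hu : u =ᵐ[volume] 0) :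
    g =ᵐ[volume] 0 := by
  refine ae_eq_zero_of_integral_contDiff_smul_eq_zero hg fun φ φ_smooth φ_supp ↦ ?_
  have integrable_smul : Integrable (fun x ↦ φ x • g x) :=
    hg.integrable_smul_left_of_hasCompactSupport φ_smooth.continuous φ_supp
  refine ext_inner_left ℝ fun e ↦ ?_
  have integral_left : ∫ x, u x * fderiv ℝ φ x e = 0 :=
    integral_eq_zero_of_ae (hu.mono fun x hx ↦ mul_eq_zero_of_left hx _)
  have integral_right : ∫ x, ⟪g x, e⟫ * φ x = 0 :=
    neg_eq_zero.1 ((hug φ ⟨φ_smooth, φ_supp, subset_univ _⟩ e).symm.trans integral_left)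
  rw [← integral_inner integrable_smul, inner_zero_right, ← integral_right]
  congr with x
  rw [inner_smul_right, real_inner_comm, mul_comm]

theorem isClosed_setOf_hasWeakGradient {q : ℝ≥0∞} [Fact (1 ≤ q)] :
    IsClosed {w : SobPair N q | HasWeakGradient w.1 w.2} := by
  simp only [HasWeakGradient, Set.ofPred_forall]
  refine isClosed_iInter fun φ ↦ isClosed_iInter fun ⟨φ_smooth, φ_supp, _⟩ ↦
    isClosed_iInter fun e ↦ ?_
  have dφ_cont : Continuous fun x ↦ fderiv ℝ φ x e :=
    (φ_smooth.continuous_fderiv (by simp)).clm_apply continuous_const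
  have φ_memLp : MemLp φ q.conjExponent :=
    φ_smooth.continuous.memLp_of_hasCompactSupport φ_supp
  have dφ_memLp : MemLp (fun x ↦ fderiv ℝ φ x e) q.conjExponent :=
    dφ_cont.memLp_of_hasCompactSupport (φ_supp.fderiv_apply ℝ e)
  have left_cont := continuous_integral_bilin_coeFn_left (q := q)
    (ContinuousLinearMap.mul ℝ ℝ) dφ_memLp
  have right_cont := continuous_integral_bilin_coeFn_left (q := q)
    ((ContinuousLinearMap.mul ℝ ℝ).comp ((innerSL ℝ).flip e)) φ_memLp
  exact isClosed_eq (left_cont.comp continuous_fst) (right_cont.comp continuous_snd).neg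

end WeakGradient

section Gradient

variable {H : Type*} [NormedAddCommGroup H] [InnerProductSpace ℝ H] [CompleteSpace H]
  {f g : H → ℝ} {x : H}

theorem gradient_add (hf : DifferentiableAt ℝ f x) (hg : DifferentiableAt ℝ g x) :
    gradient (f + g) x = gradient f x + gradient g x := by
  simp only [gradient, fderiv_add hf hg, map_add]

theorem gradient_const_smul (c : ℝ) (hf : DifferentiableAt ℝ f x) :
    gradient (c • f) x = c • gradient f x := by
  simp only [gradient, fderiv_const_smul hf c, map_smul]

end Gradient

/-! ### The Sobolev space `W^{1,p}_0` -/

section Sobolev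

variable {N : ℕ} {Ω : Set (EucN N)}

theorem IsTestFun.zero : IsTestFun Ω 0 :=
  ⟨contDiff_zero_fun, HasCompactSupport.zero, by simp [tsupport]⟩

theorem IsTestFun.add {φ ψ : EucN N → ℝ} (hφ : IsTestFun Ω φ) (hψ : IsTestFun Ω ψ) :
    IsTestFun Ω (φ + ψ) :=
  ⟨hφ.1.add hψ.1, hφ.2.1.add hψ.2.1,
    (tsupport_add φ ψ).trans (union_subset hφ.2.2 hψ.2.2)⟩

theorem IsTestFun.const_smul {φ : EucN N → ℝ} (c : ℝ) (hφ : IsTestFun Ω φ) :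
    IsTestFun Ω (c • φ) :=
  ⟨hφ.1.const_smul c, hφ.2.1.smul_left, (tsupport_smul_subset_right (fun _ ↦ c) φ).trans hφ.2.2⟩

/-- The subspace of pairs `(ψ, ∇ψ)` with `ψ` a test function on `Ω`, whose closure is
`W^{1,p}_0(Ω)`. -/
def testPairs (q : ℝ≥0∞) (Ω : Set (EucN N)) : Submodule ℝ (SobPair N q) where
  carrier := {w | IsTestPair q Ω w}
  zero_mem' := ⟨0, .zero, Lp.coeFn_zero _ _ _, by
    filter_upwards [Lp.coeFn_zero (EucN N) q volume] with x hx
    exact hx.trans (gradient_fun_const x (0 : ℝ)).symm⟩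
  add_mem' := by
    rintro v w ⟨φ, hφ, hv1, hv2⟩ ⟨ψ, hψ, hw1, hw2⟩
    refine ⟨φ + ψ, hφ.add hψ, (Lp.coeFn_add _ _).trans (hv1.add hw1), ?_⟩
    filter_upwards [Lp.coeFn_add v.2 w.2, hv2, hw2] with x hx hvx hwx
    rw [Prod.snd_add, hx, Pi.add_apply, hvx, hwx]
    exact (gradient_add (hφ.1.differentiable (by simp) x) (hψ.1.differentiable (by simp) x)).symm
  smul_mem' := by
    rintro c w ⟨φ, hφ, hw1, hw2⟩
    refine ⟨c • φ, hφ.const_smul c, (Lp.coeFn_smul _ _).trans (hw1.const_smul c), ?_⟩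
    filter_upwards [Lp.coeFn_smul c w.2, hw2] with x hx hwx
    rw [Prod.smul_snd, hx, Pi.smul_apply, hwx]
    exact (gradient_const_smul c (hφ.1.differentiable (by simp) x)).symm

theorem span_subset_W10 {p : ℝ} (hp : 1 ≤ p) {A : Set (SobPair N (ENNReal.ofReal p))}
    (hA : A ⊆ W10 N p hp Ω) : (Submodule.span ℝ A : Set _) ⊆ W10 N p hp Ω := by
  have := fact_one_le_ofReal hp
  exact Submodule.span_le (p := (testPairs (ENNReal.ofReal p) Ω).topologicalClosure).2 hA

theorem hasWeakGradient_of_mem_W10 {p : ℝ} {hp : 1 ≤ p} {w : SobPair N (ENNReal.ofReal p)}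
    (hw : w ∈ W10 N p hp Ω) : HasWeakGradient w.1 w.2 := by
  have := fact_one_le_ofReal hp
  refine closure_minimal ?_ isClosed_setOf_hasWeakGradient hw
  rintro v ⟨ψ, hψ, hv1, hv2⟩
  exact (hasWeakGradient_gradient (hψ.1.of_le (by simp))).congr_ae hv1 hv2

theorem eq_zero_of_mem_W10_of_fst_eq_zero {p : ℝ} {hp : 1 ≤ p} {w : SobPair N (ENNReal.ofReal p)}
    (hw : w ∈ W10 N p hp Ω) (h : w.1 = 0) : w = 0 := by
  have hu : w.1 =ᵐ[volume] 0 := h ▸ Lp.coeFn_zero _ _ _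
  have hg : LocallyIntegrable w.2 :=
    (Lp.memLp w.2).locallyIntegrable (ENNReal.one_le_ofReal.2 hp)
  exact Prod.ext h ((Lp.eq_zero_iff_ae_eq_zero).2
    ((hasWeakGradient_of_mem_W10 hw).ae_eq_zero hg hu))

end Sobolev

/-! ### Comparison of the two minmax values -/

section MinMax

variable {N : ℕ} {Ω : Set (EucN N)}

theorem mem_sobClass_of_finiteDimensional {p : ℝ} {hp : 1 ≤ p} {k : ℕ}
    (hk : (SobClass N p hp Ω k).Nonempty) {V : Submodule ℝ (SobPair N (ENNReal.ofReal p))}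
    [FiniteDimensional ℝ V] (hV : (V : Set (SobPair N (ENNReal.ofReal p))) ⊆ W10 N p hp Ω)
    (hVk : Module.finrank ℝ V ≤ k) :
    {w | w ∈ V ∧ ∫ x, |w.1 x| ^ p = 1} ∈ SobClass N p hp Ω (Module.finrank ℝ V) := by
  have := fact_one_le_ofReal hp
  let P : SobPair N (ENNReal.ofReal p) →L[ℝ] Lp ℝ (ENNReal.ofReal p) volume :=
    ContinuousLinearMap.fst ℝ _ _
  have unit_iff (w : SobPair N (ENNReal.ofReal p)) : ∫ x, |w.1 x| ^ p = 1 ↔ ‖P w‖ = 1 :=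
    integral_norm_rpow_eq_one_iff (by positivity) w.1
  have P_injOn (w) (hw : w ∈ V) (h : P w = 0) : w = 0 :=
    eq_zero_of_mem_W10_of_fst_eq_zero (hV hw) h
  obtain ⟨A, -, A_unit, -, A_compact, A_genus⟩ := hk
  have zero_notMem : (0 : SobPair N (ENNReal.ofReal p)) ∉ A := fun h ↦ by
    simpa using (unit_iff 0).1 (A_unit 0 h)
  refine ⟨fun w hw ↦ hV hw.1, fun w hw ↦ hw.2, ?_, ?_, ?_⟩
  · rintro w ⟨hwV, hw⟩
    exact ⟨V.neg_mem hwV, by rwa [unit_iff, map_neg, norm_neg, ← unit_iff]⟩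
  · simpa only [unit_iff] using isCompact_setOf_mem_and_norm_eq_one P_injOn
  · simpa only [unit_iff] using
      (A_genus.sphere_finrank A_compact zero_notMem hVk).setOf_mem_and_norm_eq_one P_injOn

theorem lambdaLS_le_courantFischer {k l : ℕ} (hk : (SobClass N 2 one_le_two Ω k).Nonempty)
    (hl : 1 ≤ l) (hlk : l ≤ k) : lambdaLS N 2 one_le_two Ω l ≤ courantFischer N Ω l := by
  refine le_iInf₂ fun V ⟨hV, V_finrank⟩ ↦ ?_
  have := FiniteDimensional.of_finrank_pos (V_finrank ▸ hl)
  exact iInf₂_le _ (V_finrank ▸ mem_sobClass_of_finiteDimensional hk hV (V_finrank.trans_le hlk))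

instance fact_one_le_ofReal_two : Fact (1 ≤ ENNReal.ofReal 2) := fact_one_le_ofReal one_le_two

instance holderConjugate_ofReal_two :
    (ENNReal.ofReal 2).HolderConjugate (ENNReal.ofReal 2) := by
  rw [ENNReal.ofReal_ofNat]
  infer_instance

/-- The bilinear form `∫ ⟪∇u, ∇v⟫ - c ∫ u v`, whose sign on the diagonal compares the Rayleigh
quotient with `c`. -/
def rayleighForm (N : ℕ) (c : ℝ) :
    SobPair N (ENNReal.ofReal 2) →L[ℝ] SobPair N (ENNReal.ofReal 2) →L[ℝ] ℝ :=
  ((innerSL ℝ).lpPairing volume _ _).bilinearComp (ContinuousLinearMap.snd ℝ _ _)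
      (ContinuousLinearMap.snd ℝ _ _) -
    c • ((innerSL ℝ).lpPairing volume _ _).bilinearComp (ContinuousLinearMap.fst ℝ _ _)
      (ContinuousLinearMap.fst ℝ _ _)

theorem rayleighForm_apply (c : ℝ) (v w : SobPair N (ENNReal.ofReal 2)) :
    rayleighForm N c v w = (∫ x, ⟪v.2 x, w.2 x⟫) - c * ∫ x, ⟪v.1 x, w.1 x⟫ := by
  simp only [rayleighForm, sub_apply, smul_apply, ContinuousLinearMap.bilinearComp_apply,
    ContinuousLinearMap.lpPairing_eq_integral, ContinuousLinearMap.coe_fst',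
    ContinuousLinearMap.coe_snd', smul_eq_mul]
  rfl

theorem rayleighForm_comm (c : ℝ) (v w : SobPair N (ENNReal.ofReal 2)) :
    rayleighForm N c v w = rayleighForm N c w v := by
  simp only [rayleighForm_apply, real_inner_comm]

theorem rayleighForm_apply_self (c : ℝ) {w : SobPair N (ENNReal.ofReal 2)}
    (hw : ∫ x, |w.1 x| ^ (2 : ℝ) = 1) :
    rayleighForm N c w w = (∫ x, ‖w.2 x‖ ^ (2 : ℝ)) - c := by
  have fst_integral : ∫ x, ⟪w.1 x, w.1 x⟫ = 1 := by
    simpa only [real_inner_self_eq_norm_sq, Real.norm_eq_abs, Real.rpow_ofNat] using hw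
  simp only [rayleighForm_apply, fst_integral, mul_one]
  simp only [real_inner_self_eq_norm_sq, Real.rpow_ofNat]

theorem courantFischer_le_lambdaLS (l : ℕ) :
    courantFischer N Ω l ≤ lambdaLS N 2 one_le_two Ω l := by
  refine le_iInf₂ fun A ⟨A_subset, A_unit, _, _, A_genus⟩ ↦
    le_of_forall_gt_imp_ge_of_dense fun c hc ↦ ?_
  rcases eq_or_ne c ⊤ with rfl | c_ne_top
  · exact le_top
  lift c to NNReal using c_ne_top
  have form_neg (w) (hw : w ∈ A) : rayleighForm N c w w < 0 := by
    have energy_lt : ENNReal.ofReal (∫ x, ‖w.2 x‖ ^ (2 : ℝ)) < c :=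
      (le_iSup₂_of_le w hw le_rfl).trans_lt hc
    rw [rayleighForm_apply_self _ (A_unit w hw), sub_neg]
    exact (ENNReal.ofReal_lt_coe_iff (by positivity)).1 energy_lt
  obtain ⟨V, V_le, -, V_finrank, form_nonpos⟩ :=
    A_genus.exists_submodule_forall_apply_self_nonpos (rayleighForm_comm c) form_neg
  have V_subset := (SetLike.coe_subset_coe.2 V_le).trans (span_subset_W10 one_le_two A_subset)
  refine iInf₂_le_of_le V ⟨V_subset, V_finrank⟩ (iSup₂_le fun w ⟨hwV, hw⟩ ↦ ?_)
  have energy_le := form_nonpos w hwV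
  rw [rayleighForm_apply_self _ hw, sub_nonpos] at energy_le
  exact ENNReal.ofReal_le_coe.2 energy_le

end MinMax

theorem statement19_general (N : ℕ) (Ω : Set (EucN N)) (k : ℕ)
    (hfin : lambdaLS N 2 one_le_two Ω k < ⊤) :
    ∀ ℓ : ℕ, 1 ≤ ℓ → ℓ ≤ k →
      lambdaLS N 2 one_le_two Ω ℓ = courantFischer N Ω ℓ := by
  intro ℓ hℓ hℓk
  obtain ⟨A, hA⟩ := iInf_lt_iff.1 hfin
  obtain ⟨A_mem, -⟩ := iInf_lt_iff.1 hA
  exact le_antisymm (lambdaLS_le_courantFischer ⟨A, A_mem⟩ hℓ hℓk) (courantFischer_le_lambdaLS ℓ)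

theorem statement19 (N : ℕ) (Ω : Set (EucN N)) (hΩ : IsOpen Ω)
    (k : ℕ) (hk : k ≠ 0)
    (hlt : lambdaLS N 2 one_le_two Ω k < Einfty N 2 one_le_two Ω) :
    ∀ ℓ : ℕ, 1 ≤ ℓ → ℓ ≤ k →
      lambdaLS N 2 one_le_two Ω ℓ = courantFischer N Ω ℓ := by
  exact statement19_general N Ω k (hlt.trans_le le_top)

end
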